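/- Let n, m be positive integers, let F ∈ ℝⁿ be a fixed load vector, and let K : ℝᵐ → Matrix n n ℝ be differentiable at a point x₀ with K(x) symmetric and invertible for all x in a neighborhood of x₀. Define the displacement U(x) = K(x)⁻¹ F and the compliance c(x) = Fᵀ U(x). Then c is differentiable at x₀ and, for every coordinate index e ∈ {1,…,m}, its partial derivative satisfies ∂c/∂x_e(x₀) = − U(x₀)ᵀ (∂K/∂x_e)(x₀) U(x₀). -/

import Mathlib

open Matrix

attribute [local instance] Matrix.normedAddCommGroup Matrix.normedSpace

/-!
Differentiating `A ↦ A⁻¹` in the direction `H` gives `-A⁻¹ H A⁻¹`, so the derivative of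
`Gᵀ K(x)⁻¹ F` at `x₀` is `-λᵀ K'(x₀) U(x₀)`, where `U = K⁻¹ F` and `λ = K(x₀)⁻ᵀ G` is the adjoint
state. The compliance is the self-adjoint case: when `G = F` and `K(x₀)` is symmetric, `λ = U(x₀)`.
-/

/-- The bilinear form `uᵀ M v` as a continuous linear functional of the matrix `M`, for fixed
vectors `u` and `v`; it expresses the derivatives of `M`-dependent scalar outputs. -/
def dotProductMulVecCLM {R ι κ : Type*} [CommSemiring R] [TopologicalSpace R]
    [IsTopologicalSemiring R] [Fintype ι] [Fintype κ] (u : ι → R) (v : κ → R) :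
    Matrix ι κ R →L[R] R where
  toFun M := u ⬝ᵥ M *ᵥ v
  map_add' M N := by rw [add_mulVec, dotProduct_add]
  map_smul' a M := by rw [smul_mulVec, dotProduct_smul, RingHom.id_apply]
  cont := by fun_prop

section

variable {𝕜 E ι : Type*} [NontriviallyNormedField 𝕜] [CompleteSpace 𝕜]
  [NormedAddCommGroup E] [NormedSpace 𝕜 E] [Fintype ι] [DecidableEq ι]

theorem hasFDerivAt_matrix_inv {A : Matrix ι ι 𝕜} (hA : IsUnit A) :
    HasFDerivAt (fun M : Matrix ι ι 𝕜 => M⁻¹)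
      (-(LinearMap.mulLeftRight 𝕜 (A⁻¹, A⁻¹)).toContinuousLinearMap) A := by
  -- The entrywise sup norm is not submultiplicative. The `ℓ^∞` operator norm is, and it induces
  -- the same topology, which is all that `HasFDerivAt` depends on.
  let : NormedRing (Matrix ι ι 𝕜) := Matrix.linftyOpNormedRing
  let : NormedAlgebra 𝕜 (Matrix ι ι 𝕜) := Matrix.linftyOpNormedAlgebra
  have : HasSummableGeomSeries (Matrix ι ι 𝕜) :=
    @instHasSummableGeomSeriesOfCompleteSpace _ _ (Matrix.instCompleteSpace ..)
  obtain ⟨u, rfl⟩ := hA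
  rw [← coe_units_inv, funext nonsing_inv_eq_ringInverse]
  exact hasFDerivAt_ringInverse u

theorem hasFDerivAt_dotProduct_inv_mulVec {K : E → Matrix ι ι 𝕜} {K' : E →L[𝕜] Matrix ι ι 𝕜}
    {x₀ : E} (hK : HasFDerivAt K K' x₀) (hinv : IsUnit (K x₀)) (G F : ι → 𝕜) :
    HasFDerivAt (fun x => G ⬝ᵥ (K x)⁻¹ *ᵥ F)
      (-(dotProductMulVecCLM (G ᵥ* (K x₀)⁻¹) ((K x₀)⁻¹ *ᵥ F)).comp K') x₀ := by
  refine ((dotProductMulVecCLM G F).hasFDerivAt.comp x₀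
    ((hasFDerivAt_matrix_inv hinv).comp x₀ hK)).congr_fderiv ?_
  ext v
  calc G ⬝ᵥ -((K x₀)⁻¹ * K' v * (K x₀)⁻¹) *ᵥ F
    _ = -(G ᵥ* (K x₀)⁻¹ ⬝ᵥ K' v *ᵥ (K x₀)⁻¹ *ᵥ F) := by
      simp only [neg_mulVec, dotProduct_neg, ← mulVec_mulVec, dotProduct_mulVec G]

theorem compliance_partial_deriv_general (F : ι → 𝕜) (K : E → Matrix ι ι 𝕜) (x₀ : E)
    (hK : DifferentiableAt 𝕜 K x₀) (hsym : (K x₀).IsSymm) (hinv : IsUnit (K x₀))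
    (U : E → ι → 𝕜) (hU : ∀ x, U x = (K x)⁻¹ *ᵥ F) (c : E → 𝕜) (hc : ∀ x, c x = F ⬝ᵥ U x) :
    DifferentiableAt 𝕜 c x₀ ∧
      ∀ v : E, fderiv 𝕜 c x₀ v = -(U x₀ ⬝ᵥ fderiv 𝕜 K x₀ v *ᵥ U x₀) := by
  have adjoint_state : F ᵥ* (K x₀)⁻¹ = U x₀ := by
    rw [hU, ← mulVec_transpose, hsym.inv.eq]
  have hasFDerivAt_c :
      HasFDerivAt c (-(dotProductMulVecCLM (U x₀) (U x₀)).comp (fderiv 𝕜 K x₀)) x₀ := by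
    have h := hasFDerivAt_dotProduct_inv_mulVec hK.hasFDerivAt hinv F F
    simpa only [adjoint_state, ← hU, ← hc] using h
  refine ⟨hasFDerivAt_c.differentiableAt, fun v => ?_⟩
  rw [hasFDerivAt_c.fderiv]
  rfl

end

/-- For a fixed load `F` and a stiffness map `K` differentiable at `x₀`, with `K x`
symmetric and invertible near `x₀`, the compliance `c x = Fᵀ (K x)⁻¹ F` is differentiable
at `x₀` and its partial derivative in direction `e` is `− U(x₀)ᵀ (∂K/∂x_e)(x₀) U(x₀)`. -/
theorem compliance_partial_deriv
    (n m : ℕ) (hn : 0 < n) (hm : 0 < m)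
    (F : Fin n → ℝ)
    (K : (Fin m → ℝ) → Matrix (Fin n) (Fin n) ℝ)
    (x₀ : Fin m → ℝ)
    (hK : DifferentiableAt ℝ K x₀)
    (hsym : ∀ᶠ x in nhds x₀, (K x).IsSymm)
    (hinv : ∀ᶠ x in nhds x₀, IsUnit (K x))
    (U : (Fin m → ℝ) → Fin n → ℝ)
    (hU : ∀ x, U x = (K x)⁻¹.mulVec F)
    (c : (Fin m → ℝ) → ℝ)
    (hc : ∀ x, c x = F ⬝ᵥ U x) :
    DifferentiableAt ℝ c x₀ ∧
      ∀ e : Fin m,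
        fderiv ℝ c x₀ (Pi.single e 1) =
          -(U x₀ ⬝ᵥ (fderiv ℝ K x₀ (Pi.single e 1)).mulVec (U x₀)) :=
  (compliance_partial_deriv_general F K x₀ hK hsym.self_of_nhds hinv.self_of_nhds
    U hU c hc).imp_right fun h e => h (Pi.single e 1)
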